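/- Let k ≥ 1 be a real number and suppose that every row of the matrix A has ℓ² norm at most k. Then every coordinate of every vertex solution to the system Σ is at most n^{1/2}·k^{n−1}. (Theorem 8.1(1).) -/

import Mathlib

/-- A solution to the system Σ: `A x = 0`, all coordinates nonnegative, and for each
pair `(i, j)` in `C`, `x i = 0` or `x j = 0`. -/
def IsSolution {m n : ℕ} (A : Matrix (Fin m) (Fin n) ℤ)
    (C : Finset (Fin n × Fin n)) (x : Fin n → ℝ) : Prop :=
  (∀ i : Fin m, ∑ j : Fin n, (A i j : ℝ) * x j = 0) ∧
    (∀ j : Fin n, 0 ≤ x j) ∧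
    (∀ p ∈ C, x p.1 = 0 ∨ x p.2 = 0)

/-- A vector is integral if every coordinate is an integer. -/
def IsIntegralVec {n : ℕ} (x : Fin n → ℝ) : Prop :=
  ∀ j : Fin n, ∃ z : ℤ, x j = (z : ℝ)

/-- An integral solution `x` is a vertex solution if (i) whenever `k • x = y + z` for a
positive real `k` and solutions `y`, `z`, both `y` and `z` are scalar multiples of `x`;
and (ii) `x` is not `k • y` for an integer `k ≥ 2` and an integral solution `y`. -/
def IsVertexSolution {m n : ℕ} (A : Matrix (Fin m) (Fin n) ℤ)
    (C : Finset (Fin n × Fin n)) (x : Fin n → ℝ) : Prop :=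
  IsSolution A C x ∧ IsIntegralVec x ∧
    (∀ k : ℝ, 0 < k → ∀ y z : Fin n → ℝ, IsSolution A C y → IsSolution A C z →
      k • x = y + z → (∃ c : ℝ, y = c • x) ∧ ∃ c : ℝ, z = c • x) ∧
    ¬∃ (k : ℤ) (y : Fin n → ℝ), 2 ≤ k ∧ IsSolution A C y ∧ IsIntegralVec y ∧
      x = (k : ℝ) • y

/-- An integral solution is fundamental if it is not the sum of two nonzero
integral solutions. -/
def IsFundamental {m n : ℕ} (A : Matrix (Fin m) (Fin n) ℤ)
    (C : Finset (Fin n × Fin n)) (x : Fin n → ℝ) : Prop :=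
  IsSolution A C x ∧ IsIntegralVec x ∧
    ¬∃ y z : Fin n → ℝ, IsSolution A C y ∧ IsIntegralVec y ∧
      IsSolution A C z ∧ IsIntegralVec z ∧ y ≠ 0 ∧ z ≠ 0 ∧ x = y + z

/-!
A vertex solution `x` spans the kernel of its tight constraints: the rows of `A` together with the
unit vectors `eᵢ` for `x i = 0`. Fix `l` with `x l ≠ 0`. Adding the row `e_l` leaves a trivial
kernel, so `e_l` can be completed by tight constraints to a nonsingular integer matrix `M`. As
`M x = x l • e_l`, Cramer's rule makes `x` proportional to the column of cofactors of the row
`e_l`. That column is integral and `x` is primitive, so each coordinate of `x` is at most the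
absolute value of the corresponding cofactor, and by Hadamard's inequality this is at most
`k ^ (n - 1)`.
-/

open Matrix

section Hadamard

variable {𝕜 ι E : Type*} [RCLike 𝕜] [Fintype ι] [DecidableEq ι] [NormedAddCommGroup E]
  [InnerProductSpace 𝕜 E]

theorem norm_orthonormalBasis_det_eq (b c : OrthonormalBasis ι 𝕜 E) (v : ι → E) :
    ‖b.toBasis.det v‖ = ‖c.toBasis.det v‖ := by
  rw [Module.Basis.det_apply, ← b.toBasis.toMatrix_mul_toMatrix c.toBasis, det_mul, norm_mul,
    ← Module.Basis.det_apply, ← Module.Basis.det_apply, c.coe_toBasis,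
    b.det_to_matrix_orthonormalBasis c, one_mul]

theorem norm_orthonormalBasis_det_le_prod_norm (b : OrthonormalBasis ι 𝕜 E) (v : ι → E) :
    ‖b.toBasis.det v‖ ≤ ∏ i, ‖v i‖ := by
  -- The index type is transported to `Fin _` because Gram-Schmidt needs an order on it.
  let e := Fintype.equivFin ι
  have : FiniteDimensional 𝕜 E := b.toBasis.finiteDimensional_of_finite
  let c := InnerProductSpace.gramSchmidtOrthonormalBasis
    (Module.finrank_eq_card_basis (b.toBasis.reindex e)) (v ∘ e.symm)
  calc ‖b.toBasis.det v‖ = ‖c.toBasis.det (v ∘ e.symm)‖ := by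
        rw [norm_orthonormalBasis_det_eq b (c.reindex e.symm), OrthonormalBasis.reindex_toBasis,
          Module.Basis.det_reindex]
    _ = ∏ i, ‖inner 𝕜 (c i) ((v ∘ e.symm) i)‖ := by
        rw [InnerProductSpace.gramSchmidtOrthonormalBasis_det, norm_prod]
    _ ≤ ∏ i, ‖v (e.symm i)‖ := Finset.prod_le_prod (fun _ _ => norm_nonneg _) fun i _ => by
        simpa using norm_inner_le_norm (c i) (v (e.symm i))
    _ = ∏ i, ‖v i‖ := e.symm.prod_comp fun i => ‖v i‖

theorem norm_det_le_prod_norm_row (M : Matrix ι ι 𝕜) :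
    ‖M.det‖ ≤ ∏ i, ‖WithLp.toLp 2 (M i)‖ := by
  let b := EuclideanSpace.basisFun ι 𝕜
  have hM : b.toBasis.toMatrix (fun i => WithLp.toLp 2 (M i)) = Mᵀ := by
    ext i j
    simp [b, Module.Basis.toMatrix_apply]
  simpa only [Module.Basis.det_apply, hM, det_transpose] using
    norm_orthonormalBasis_det_le_prod_norm b fun i => WithLp.toLp 2 (M i)

theorem norm_adjugate_apply_le_prod_norm_row (M : Matrix ι ι 𝕜) (j i : ι) :
    ‖M.adjugate j i‖ ≤ ∏ i' ∈ Finset.univ.erase i, ‖WithLp.toLp 2 (M i')‖ := by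
  rw [adjugate_apply]
  refine (norm_det_le_prod_norm_row _).trans_eq ?_
  rw [← Finset.mul_prod_erase _ _ (Finset.mem_univ i), updateRow_self, PiLp.toLp_single,
    PiLp.norm_single, norm_one, one_mul]
  refine Finset.prod_congr rfl fun i' hi' => ?_
  rw [updateRow_ne (Finset.ne_of_mem_erase hi')]

theorem abs_adjugate_apply_le_prod_sqrt_sum_sq (M : Matrix ι ι ℤ) (j i : ι) :
    |(M.adjugate j i : ℝ)| ≤ ∏ i' ∈ Finset.univ.erase i, √(∑ j', (M i' j' : ℝ) ^ 2) := by
  have h := norm_adjugate_apply_le_prod_norm_row ((Int.castRingHom ℝ).mapMatrix M) j i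
  rw [← RingHom.map_adjugate] at h
  simpa [EuclideanSpace.norm_eq] using h

end Hadamard

section Selection

variable {K ι : Type*}

theorem span_eq_top_of_forall_dotProduct_eq_zero [Field K] [Fintype ι] {S : Set (ι → K)}
    (hS : ∀ v, (∀ s ∈ S, s ⬝ᵥ v = 0) → v = 0) : Submodule.span K S = ⊤ := by
  classical
  by_contra hne
  obtain ⟨f, hf, hker⟩ := Submodule.exists_le_ker_of_lt_top _ (lt_top_iff_ne_top.2 hne)
  obtain ⟨v, rfl⟩ := (dotProductEquiv K ι).surjective f
  have hv : v = 0 := hS v fun s hs => by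
    simpa [dotProduct_comm] using hker (Submodule.subset_span hs)
  exact hf (by rw [hv, map_zero])

theorem exists_linearIndependent_comp_of_span_eq_top [DivisionRing K] {V α : Type*}
    [AddCommGroup V] [Module K V] (b : Module.Basis ι K V) {φ : α → V} {a : α} {R : Set α}
    (ha : φ a ≠ 0) (hR : Submodule.span K (φ '' insert a R) = ⊤) (i₀ : ι) :
    ∃ e : ι → α, e i₀ = a ∧ (∀ i ≠ i₀, e i ∈ R) ∧ LinearIndependent K (φ ∘ e) := by
  classical
  obtain ⟨s, hsR, has, hspan, hli⟩ := exists_linearIndepOn_extension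
    (LinearIndepOn.singleton (R := K) ha) (Set.singleton_subset_iff.2 (Set.mem_insert a R))
  have htop : ⊤ ≤ Submodule.span K (Set.range fun r : s => φ r) := by
    rw [← Set.image_eq_range, ← hR]
    exact Submodule.span_le.2 hspan
  let e := (b.indexEquiv (Module.Basis.mk hli htop)).setValue i₀ ⟨a, has rfl⟩
  have he : e i₀ = ⟨a, has rfl⟩ := Equiv.setValue_eq ..
  refine ⟨fun i => e i, congrArg Subtype.val he, fun i hi => ?_, hli.comp e e.injective⟩
  refine (hsR (e i).2).resolve_left fun h => hi (e.injective ?_)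
  rw [he]
  exact Subtype.ext h

theorem exists_det_ne_zero_of_forall_dotProduct_eq_zero {D : Type*} [CommRing D] [Field K]
    [Algebra D K] [Fintype ι] [DecidableEq ι] {a : ι → D} {R : Set (ι → D)}
    (ha : algebraMap D K ∘ a ≠ 0)
    (hR : ∀ v : ι → K, (∀ r ∈ insert a R, (algebraMap D K ∘ r) ⬝ᵥ v = 0) → v = 0) (i₀ : ι) :
    ∃ M : Matrix ι ι D, M i₀ = a ∧ (∀ i ≠ i₀, M i ∈ R) ∧ M.det ≠ 0 := by
  have hspan : Submodule.span K ((algebraMap D K ∘ ·) '' insert a R) = ⊤ :=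
    span_eq_top_of_forall_dotProduct_eq_zero fun v hv =>
      hR v fun _ hr => hv _ (Set.mem_image_of_mem _ hr)
  obtain ⟨(M : Matrix ι ι D), hMa, hMR, hli⟩ :=
    exists_linearIndependent_comp_of_span_eq_top (Pi.basisFun K ι) ha hspan i₀
  refine ⟨M, hMa, hMR, fun hdet => ?_⟩
  have hunit : IsUnit ((algebraMap D K).mapMatrix M).det :=
    (isUnit_iff_isUnit_det _).1 (linearIndependent_rows_iff_isUnit.1 hli)
  rw [← RingHom.map_det, hdet, map_zero] at hunit
  exact not_isUnit_zero hunit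

end Selection

theorem det_mul_eq_dotProduct_mul_adjugate {D ι : Type*} [CommRing D] [Fintype ι] [DecidableEq ι]
    {M : Matrix ι ι D} {z : ι → D} {l : ι} (h : ∀ i ≠ l, M i ⬝ᵥ z = 0) (j : ι) :
    M.det * z j = M l ⬝ᵥ z * M.adjugate j l := by
  have hMz : M *ᵥ z = Pi.single l (M l ⬝ᵥ z) := by
    ext i
    obtain rfl | hi := eq_or_ne i l
    · simp [mulVec]
    · simp [mulVec, h i hi, hi]
  calc M.det * z j = (M.adjugate *ᵥ (M *ᵥ z)) j := by
        simp [mulVec_mulVec, adjugate_mul, smul_mulVec]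
    _ = M l ⬝ᵥ z * M.adjugate j l := by simp [hMz, mul_comm]

theorem dvd_of_gcd_eq_one_of_forall_mul_eq_mul {α β : Type*} [CommMonoidWithZero α]
    [StrongNormalizedGCDMonoid α] {s : Finset β} {z y : β → α} {c d : α}
    (hz : s.gcd z = 1) (hc : c ≠ 0) (h : ∀ j ∈ s, d * z j = c * y j) {j : β} (hj : j ∈ s) :
    z j ∣ y j := by
  have hcd : c ∣ s.gcd fun j => d * z j := Finset.dvd_gcd fun j hj => ⟨y j, h j hj⟩
  rw [Finset.gcd_mul_left, hz, mul_one, dvd_normalize_iff] at hcd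
  obtain ⟨q, rfl⟩ := hcd
  refine ⟨q, mul_left_cancel₀ hc ?_⟩
  rw [← h j hj, mul_assoc, mul_comm q]

theorem abs_le_abs_of_gcd_eq_one_of_forall_mul_eq_mul {β : Type*} {s : Finset β} {z y : β → ℤ}
    {c d : ℤ} (hz : s.gcd z = 1) (hc : c ≠ 0) (hd : d ≠ 0) (h : ∀ j ∈ s, d * z j = c * y j)
    {j : β} (hj : j ∈ s) : |z j| ≤ |y j| := by
  obtain hy | hy := eq_or_ne (y j) 0
  · have hzj : z j = 0 := by simpa [hy, hd] using h j hj
    rw [hzj, hy]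
  · rw [Int.abs_eq_natAbs, Int.abs_eq_natAbs]
    exact_mod_cast Int.natAbs_le_of_dvd_ne_zero
      (dvd_of_gcd_eq_one_of_forall_mul_eq_mul hz hc h hj) hy

theorem exists_pos_forall_mul_abs_le {K ι : Type*} [Field K] [LinearOrder K]
    [IsStrictOrderedRing K] [Finite ι] {x v : ι → K} (hx : ∀ j, 0 ≤ x j)
    (hsupp : ∀ j, x j = 0 → v j = 0) : ∃ ε > 0, ∀ j, ε * |v j| ≤ x j := by
  have hcoord (j : ι) : ∃ ε : Set.Ioi (0 : K), ε * |v j| ≤ x j := by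
    obtain h0 | hpos := (hx j).eq_or_lt
    · exact ⟨⟨1, one_pos⟩, by simp [hsupp j h0.symm, ← h0]⟩
    · refine ⟨⟨x j / (|v j| + 1), by simp only [Set.mem_Ioi]; positivity⟩, ?_⟩
      rw [div_mul_eq_mul_div, div_le_iff₀ (by positivity)]
      gcongr
      linarith
  choose δ hδ using hcoord
  obtain ⟨ε, hε⟩ := Finite.exists_ge δ
  refine ⟨ε, ε.2, fun j => le_trans ?_ (hδ j)⟩
  gcongr
  exact hε j

section TightRows

variable {κ ι : Type*} [DecidableEq ι]

/-- The rows of the constraints of `Σ` that are tight at `z`: all the rows of `A`, and the unit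
vectors of the coordinates where `z` vanishes. Compatibility constraints need no row of their own,
since each of them forces a coordinate to vanish. -/
def tightRows {D : Type*} [Zero D] [One D] (A : Matrix κ ι D) (z : ι → D) : Set (ι → D) :=
  Set.range A ∪ (fun i => Pi.single i 1) '' {i | z i = 0}

theorem dotProduct_eq_zero_of_mem_tightRows {D : Type*} [NonAssocSemiring D] [Fintype ι]
    {A : Matrix κ ι D} {z r : ι → D} (hA : A *ᵥ z = 0) (hr : r ∈ tightRows A z) :
    r ⬝ᵥ z = 0 := by
  obtain ⟨i, rfl⟩ | ⟨i, hi, rfl⟩ := hr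
  · exact congrFun hA i
  · simpa using hi

theorem sqrt_sum_sq_le_of_mem_tightRows [Fintype ι] {A : Matrix κ ι ℤ} {z r : ι → ℤ} {k : ℝ}
    (hk : 1 ≤ k) (hA : ∀ i, √(∑ j, (A i j : ℝ) ^ 2) ≤ k) (hr : r ∈ tightRows A z) :
    √(∑ j, (r j : ℝ) ^ 2) ≤ k := by
  obtain ⟨i, rfl⟩ | ⟨i, -, rfl⟩ := hr
  · exact hA i
  · simpa [Pi.single_apply] using hk

end TightRows

section Solutions

variable {m n : ℕ} {A : Matrix (Fin m) (Fin n) ℤ} {C : Finset (Fin n × Fin n)}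

theorem IsSolution.smul {x : Fin n → ℝ} (hx : IsSolution A C x) {c : ℝ} (hc : 0 ≤ c) :
    IsSolution A C (c • x) := by
  obtain ⟨hxA, hx0, hxC⟩ := hx
  refine ⟨fun i => ?_, fun j => mul_nonneg hc (hx0 j), fun p hp => ?_⟩
  · simp only [Pi.smul_apply, smul_eq_mul, mul_left_comm _ c, ← Finset.mul_sum, hxA, mul_zero]
  · exact (hxC p hp).imp (fun h => by simp [h]) fun h => by simp [h]

theorem IsSolution.add_of_abs_le {x v : Fin n → ℝ} (hx : IsSolution A C x)
    (hv : ∀ i, ∑ j, (A i j : ℝ) * v j = 0) (hle : ∀ j, |v j| ≤ x j) :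
    IsSolution A C (x + v) := by
  obtain ⟨hxA, -, hxC⟩ := hx
  have hzero (j : Fin n) (hj : x j = 0) : (x + v) j = 0 := by
    have hvj : v j = 0 := abs_nonpos_iff.1 (hj ▸ hle j)
    rw [Pi.add_apply, hj, hvj, add_zero]
  refine ⟨fun i => ?_, fun j => neg_le_iff_add_nonneg'.1 (neg_le.1 ?_), fun p hp => ?_⟩
  · simp only [Pi.add_apply, mul_add, Finset.sum_add_distrib, hxA, hv, add_zero]
  · exact (neg_le_abs (v j)).trans (hle j)
  · exact (hxC p hp).imp (hzero p.1) (hzero p.2)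

theorem IsVertexSolution.exists_eq_smul {x v : Fin n → ℝ} (hx : IsVertexSolution A C x)
    (hv : ∀ i, ∑ j, (A i j : ℝ) * v j = 0) (hsupp : ∀ j, x j = 0 → v j = 0) :
    ∃ c : ℝ, v = c • x := by
  obtain ⟨hsol, -, hvert, -⟩ := hx
  obtain ⟨ε, hε, hεv⟩ := exists_pos_forall_mul_abs_le hsol.2.1 hsupp
  have hsol' (δ : ℝ) (hδ : |δ| = ε) : IsSolution A C (x + δ • v) :=
    hsol.add_of_abs_le
      (fun i => by simp only [Pi.smul_apply, smul_eq_mul, mul_left_comm _ δ, ← Finset.mul_sum, hv,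
        mul_zero])
      fun j => by simpa [abs_mul, hδ] using hεv j
  -- `2 x = (x + ε v) + (x - ε v)`
  obtain ⟨⟨c, hc⟩, -⟩ := hvert 2 two_pos _ _ (hsol' ε (abs_of_pos hε))
    (hsol' (-ε) (by rw [abs_neg, abs_of_pos hε])) (by module)
  refine ⟨ε⁻¹ * (c - 1), ?_⟩
  rw [mul_smul, eq_inv_smul_iff₀ hε.ne', sub_smul, one_smul, ← hc, add_sub_cancel_left]

theorem IsVertexSolution.ne_zero {x : Fin n → ℝ} (hx : IsVertexSolution A C x) : x ≠ 0 := by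
  rintro rfl
  obtain ⟨hsol, hint, -, hprim⟩ := hx
  exact hprim ⟨2, 0, le_rfl, hsol, hint, (smul_zero _).symm⟩

variable {z : Fin n → ℤ}

theorem IsVertexSolution.exists_apply_ne_zero (hz : IsVertexSolution A C fun j => (z j : ℝ)) :
    ∃ l, z l ≠ 0 := by
  by_contra! h
  exact hz.ne_zero (funext fun j => by simp [h j])

theorem IsVertexSolution.gcd_eq_one (hz : IsVertexSolution A C fun j => (z j : ℝ)) :
    Finset.univ.gcd z = 1 := by
  obtain ⟨l, hl⟩ := hz.exists_apply_ne_zero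
  obtain ⟨hsol, -, -, hprim⟩ := hz
  obtain ⟨w, hzw, -⟩ := Finset.extract_gcd z ⟨l, Finset.mem_univ l⟩
  set g := Finset.univ.gcd z
  have hg : 0 < g := lt_of_le_of_ne (Int.nonneg_of_normalize_eq_self Finset.normalize_gcd)
    fun h => hl (Finset.gcd_eq_zero_iff.1 h.symm l (Finset.mem_univ l))
  have hg' : (0 : ℝ) < g := mod_cast hg
  have hzw' : (fun j => (z j : ℝ)) = (g : ℝ) • fun j => (w j : ℝ) :=
    funext fun j => by simp [hzw j (Finset.mem_univ j)]
  by_contra hg1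
  refine hprim ⟨g, fun j => w j, by lia, ?_, fun j => ⟨w j, rfl⟩, hzw'⟩
  rw [← inv_smul_smul₀ hg'.ne' fun j => (w j : ℝ), ← hzw']
  exact hsol.smul (inv_nonneg.2 hg'.le)

theorem IsVertexSolution.mulVec_eq_zero (hz : IsVertexSolution A C fun j => (z j : ℝ)) :
    A *ᵥ z = 0 :=
  funext fun i => by
    have h : ∑ j, (A i j : ℝ) * z j = 0 := hz.1.1 i
    exact_mod_cast h

theorem IsVertexSolution.exists_det_ne_zero_tightRows
    (hz : IsVertexSolution A C fun j => (z j : ℝ)) {l : Fin n} (hl : z l ≠ 0) :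
    ∃ M : Matrix (Fin n) (Fin n) ℤ,
      M l = Pi.single l 1 ∧ (∀ i ≠ l, M i ∈ tightRows A z) ∧ M.det ≠ 0 := by
  have hcast (i : Fin n) : algebraMap ℤ ℝ ∘ Pi.single i 1 = Pi.single i 1 := by
    ext j
    simp [Pi.single_apply]
  refine exists_det_ne_zero_of_forall_dotProduct_eq_zero (K := ℝ) ?_ (fun v hv => ?_) l
  · simp only [hcast, ne_eq, Pi.single_eq_zero_iff, one_ne_zero, not_false_eq_true]
  obtain ⟨hvl, hvR⟩ := Set.forall_mem_insert.1 hv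
  obtain ⟨c, rfl⟩ := hz.exists_eq_smul (v := v) (fun i => hvR _ (Or.inl ⟨i, rfl⟩)) fun i hi => by
    simpa only [hcast, single_one_dotProduct] using hvR _ (Or.inr ⟨i, mod_cast hi, rfl⟩)
  rw [hcast, single_one_dotProduct] at hvl
  have hc : c = 0 := by simpa [hl] using hvl
  rw [hc, zero_smul]

end Solutions

theorem vertex_solution_coord_bound_general {m n : ℕ} (A : Matrix (Fin m) (Fin n) ℤ)
    (C : Finset (Fin n × Fin n)) (k : ℝ) (hk : 1 ≤ k)
    (hA : ∀ i : Fin m, Real.sqrt (∑ j : Fin n, ((A i j : ℝ)) ^ 2) ≤ k)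
    (x : Fin n → ℝ) (hx : IsVertexSolution A C x) (j : Fin n) :
    x j ≤ k ^ (n - 1) := by
  obtain ⟨z, rfl⟩ : ∃ z : Fin n → ℤ, x = fun j => (z j : ℝ) := by
    choose z hz using hx.2.1
    exact ⟨z, funext hz⟩
  obtain ⟨l, hl⟩ := hx.exists_apply_ne_zero
  obtain ⟨M, hMl, hMR, hdet⟩ := hx.exists_det_ne_zero_tightRows hl
  have hcramer (j : Fin n) : M.det * z j = z l * M.adjugate j l := by
    simpa [hMl] using det_mul_eq_dotProduct_mul_adjugate
      (fun i hi => dotProduct_eq_zero_of_mem_tightRows hx.mulVec_eq_zero (hMR i hi)) j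
  have hz : |z j| ≤ |M.adjugate j l| :=
    abs_le_abs_of_gcd_eq_one_of_forall_mul_eq_mul hx.gcd_eq_one hl hdet
      (fun j _ => hcramer j) (Finset.mem_univ j)
  calc (z j : ℝ) ≤ |(M.adjugate j l : ℝ)| := mod_cast (le_abs_self _).trans hz
    _ ≤ ∏ i ∈ Finset.univ.erase l, √(∑ j, (M i j : ℝ) ^ 2) :=
        abs_adjugate_apply_le_prod_sqrt_sum_sq M j l
    _ ≤ ∏ _i ∈ Finset.univ.erase l, k :=
        Finset.prod_le_prod (fun _ _ => Real.sqrt_nonneg _) fun i hi =>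
          sqrt_sum_sq_le_of_mem_tightRows hk hA (hMR i (Finset.ne_of_mem_erase hi))
    _ = k ^ (n - 1) := by simp

/-- Theorem 8.1(1): if every row of `A` has ℓ² norm at most `k ≥ 1`, then every
coordinate of every vertex solution to the system Σ is at most `n^(1/2) * k^(n-1)`. -/
theorem vertex_solution_coord_bound {m n : ℕ} (hm : 0 < m) (hn : 0 < n)
    (A : Matrix (Fin m) (Fin n) ℤ) (C : Finset (Fin n × Fin n))
    (k : ℝ) (hk : 1 ≤ k)
    (hA : ∀ i : Fin m, Real.sqrt (∑ j : Fin n, ((A i j : ℝ)) ^ 2) ≤ k)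
    (x : Fin n → ℝ) (hx : IsVertexSolution A C x) (j : Fin n) :
    x j ≤ (n : ℝ) ^ ((1 : ℝ) / 2) * k ^ (n - 1) := by
  have hsqrt : (1 : ℝ) ≤ (n : ℝ) ^ ((1 : ℝ) / 2) :=
    Real.one_le_rpow (mod_cast hn) (by norm_num)
  exact (vertex_solution_coord_bound_general A C k hk hA x hx j).trans
    (le_mul_of_one_le_left (by positivity) hsqrt)
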